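/- If h is a biholomorphic automorphism of the upper half-plane Π = {ζ ∈ ℂ : Im ζ > 0} whose restriction to the strip Λ = {ζ ∈ ℂ : 0 < Im ζ < 1} maps Λ biholomorphically onto Λ, then there exists t ∈ ℝ such that h(ζ) = ζ + t for all ζ ∈ Π. -/

import Mathlib

/-!
By the Schwarz–Pick lemma (`pick_normSq_le`), applied to `h` and to its inverse, `h` preserves the
quantity `|z - w|² / (Im z · Im w)`. Since `h` preserves both `Π` and `Λ`, it maps the complement
`{Im ≥ 1}` into itself, and by continuity it maps the line `{Im = 1}` into the closure of `Λ`;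
hence it maps that line into itself, and on it Schwarz–Pick says that `h` is a Euclidean isometry.
An isometry of a line is `x ↦ x + t` or `x ↦ -x + t` (`real_isometry_cases`). The identity theorem
spreads the formula from the line to all of `Π`; in the second case it would read
`h ζ = -ζ + 2i + t`, which sends `3i` outside `Π`.
-/

set_option linter.unusedVariables false

open Set

/-- This identity makes the pseudo-hyperbolic distance `|z - a| / |z - conj a|` less than `1` on
`Π`, and turns bounds on it into bounds on `|z - a|² / (Im z · Im a)`. -/
lemma normSq_sub_conj (z a : ℂ) :
    Complex.normSq (z - (starRingEnd ℂ) a) = Complex.normSq (z - a) + 4 * z.im * a.im := by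
  simp [Complex.normSq_apply]
  ring

lemma sub_conj_ne_zero {z a : ℂ} (hz : 0 < z.im) (ha : 0 < a.im) :
    z - (starRingEnd ℂ) a ≠ 0 := by
  intro h
  have := congrArg Complex.im h
  simp at this
  linarith

/-- The Cayley transform `z ↦ (z - a) / (z - conj a)` sends `Π` into the unit disc. -/
lemma norm_cayley_lt_one {z a : ℂ} (hz : 0 < z.im) (ha : 0 < a.im) :
    ‖(z - a) / (z - (starRingEnd ℂ) a)‖ < 1 := by
  have h0 := norm_pos_iff.2 (sub_conj_ne_zero hz ha)
  rw [norm_div, div_lt_one h0]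
  apply lt_of_pow_lt_pow_left₀ 2 h0.le
  rw [← Complex.normSq_eq_norm_sq, ← Complex.normSq_eq_norm_sq, normSq_sub_conj]
  nlinarith [mul_pos hz ha]

/-- The inverse Cayley transform sends the unit disc into `Π`. -/
lemma inv_cayley_im_pos {w u : ℂ} (hw : 0 < w.im) (hu : ‖u‖ < 1) :
    0 < ((w - (starRingEnd ℂ) w * u) / (1 - u)).im := by
  have hu1 : 1 - u ≠ 0 := by
    intro h
    rw [← sub_eq_zero.1 h] at hu
    simp at hu
  have hn : 0 < Complex.normSq (1 - u) := Complex.normSq_pos.2 hu1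
  have hu2 : Complex.normSq u < 1 := by
    rw [Complex.normSq_eq_norm_sq]
    nlinarith [norm_nonneg u]
  have key : ((w - (starRingEnd ℂ) w * u) / (1 - u)).im
      = w.im * (1 - Complex.normSq u) / Complex.normSq (1 - u) := by
    rw [Complex.div_im, ← sub_div]
    congr 1
    simp [Complex.normSq_apply]
    ring
  rw [key]
  exact div_pos (mul_pos hw (by linarith)) hn

/-- Schwarz–Pick for the upper half-plane, in the form free of denominators. -/
lemma pick_normSq_le {f : ℂ → ℂ} (hf : DifferentiableOn ℂ f {ζ : ℂ | 0 < ζ.im})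
    (hmaps : MapsTo f {ζ : ℂ | 0 < ζ.im} {ζ : ℂ | 0 < ζ.im})
    {z w : ℂ} (hz : 0 < z.im) (hw : 0 < w.im) :
    Complex.normSq (f z - f w) * (z.im * w.im)
      ≤ Complex.normSq (z - w) * ((f z).im * (f w).im) := by
  have hfz : 0 < (f z).im := hmaps hz
  have hfw : 0 < (f w).im := hmaps hw
  let ψ : ℂ → ℂ := fun u => (w - (starRingEnd ℂ) w * u) / (1 - u)
  let F : ℂ → ℂ := fun u => (f (ψ u) - f w) / (f (ψ u) - (starRingEnd ℂ) (f w))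
  have hψ : MapsTo ψ (Metric.ball 0 1) {ζ : ℂ | 0 < ζ.im} := fun u hu =>
    inv_cayley_im_pos hw (by simpa using hu)
  have hψd : DifferentiableOn ℂ ψ (Metric.ball 0 1) := by
    apply DifferentiableOn.div (by fun_prop) (by fun_prop)
    intro u hu h
    rw [← sub_eq_zero.1 h] at hu
    simp at hu
  have hfψ : DifferentiableOn ℂ (fun u => f (ψ u)) (Metric.ball 0 1) := hf.comp hψd hψ
  have hFd : DifferentiableOn ℂ F (Metric.ball 0 1) :=
    (hfψ.sub_const _).div (hfψ.sub_const _) fun u hu => sub_conj_ne_zero (hmaps (hψ hu)) hfw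
  have hFm : MapsTo F (Metric.ball 0 1) (Metric.ball 0 1) := fun u hu =>
    mem_ball_zero_iff.2 (norm_cayley_lt_one (hmaps (hψ hu)) hfw)
  have hF0 : F 0 = 0 := by simp [F, ψ]
  have hu := norm_cayley_lt_one hz hw
  have hψz : ψ ((z - w) / (z - (starRingEnd ℂ) w)) = z := by
    have h1 := sub_conj_ne_zero hz hw
    have h2 := sub_conj_ne_zero hw hw
    have h3 : 1 - (z - w) / (z - (starRingEnd ℂ) w)
        = (w - (starRingEnd ℂ) w) / (z - (starRingEnd ℂ) w) := by
      field_simp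
      ring
    simp only [ψ, h3]
    field_simp
    ring
  have main := Complex.norm_le_norm_of_mapsTo_ball hFd
    (hFm.mono_right Metric.ball_subset_closedBall) hF0 hu
  simp only [F, hψz, norm_div] at main
  rw [div_le_div_iff₀ (norm_pos_iff.2 (sub_conj_ne_zero hfz hfw))
    (norm_pos_iff.2 (sub_conj_ne_zero hz hw))] at main
  have sq := pow_le_pow_left₀ (by positivity) main 2
  simp only [mul_pow, ← Complex.normSq_eq_norm_sq, normSq_sub_conj] at sq
  nlinarith

lemma real_isometry_cases {g : ℝ → ℝ} (hg : ∀ x y, (g x - g y) ^ 2 = (x - y) ^ 2) :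
    (∀ x, g x = x + g 0) ∨ (∀ x, g x = -x + g 0) := by
  have h1 := hg 1 0
  have h1' : (g 1 - g 0 - 1) * (g 1 - g 0 + 1) = 0 := by linarith
  -- the distances to `g 0` and `g 1 = g 0 ± 1` determine `g x`
  rcases mul_eq_zero.1 h1' with h | h
  · left
    intro x
    nlinarith [hg x 0, hg x 1, congrArg (· * g x) h, congrArg (· * g 0) h]
  · right
    intro x
    nlinarith [hg x 0, hg x 1, congrArg (· * g x) h, congrArg (· * g 0) h]

/-- Identity theorem on `Π`, for agreement on the line `{Im = 1}`. -/
lemma eqOn_of_eq_on_line {f g : ℂ → ℂ} (hf : DifferentiableOn ℂ f {ζ : ℂ | 0 < ζ.im})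
    (hg : DifferentiableOn ℂ g {ζ : ℂ | 0 < ζ.im})
    (hfg : ∀ x : ℝ, f (x + Complex.I) = g (x + Complex.I)) :
    EqOn f g {ζ : ℂ | 0 < ζ.im} := by
  have ho : IsOpen {ζ : ℂ | 0 < ζ.im} := isOpen_lt continuous_const Complex.continuous_im
  have hc : IsPreconnected {ζ : ℂ | 0 < ζ.im} := (convex_halfSpace_im_gt 0).isPreconnected
  have ht : Filter.Tendsto (fun x : ℝ => (x : ℂ) + Complex.I) (nhdsWithin 0 {0}ᶜ)
      (nhdsWithin Complex.I {Complex.I}ᶜ) := by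
    apply tendsto_nhdsWithin_of_tendsto_nhds_of_eventually_within
    · have : Continuous (fun x : ℝ => (x : ℂ) + Complex.I) := by fun_prop
      simpa using (this.tendsto 0).mono_left nhdsWithin_le_nhds
    · filter_upwards [self_mem_nhdsWithin] with x hx
      simpa using hx
  refine (hf.analyticOnNhd ho).eqOn_of_preconnected_of_frequently_eq (hg.analyticOnNhd ho) hc
    (z₀ := Complex.I) (by simp) (ht.frequently ?_)
  exact (Filter.Eventually.of_forall hfg).frequently

/-- If `h` permutes `Π` and `Λ`, then it preserves the line `{Im = 1}`. -/
lemma im_eq_one_of_im_eq_one {h : ℂ → ℂ} (hcont : ContinuousOn h {ζ : ℂ | 0 < ζ.im})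
    (hbij : Set.BijOn h {ζ : ℂ | 0 < ζ.im} {ζ : ℂ | 0 < ζ.im})
    (hstrip : Set.BijOn h {ζ : ℂ | 0 < ζ.im ∧ ζ.im < 1} {ζ : ℂ | 0 < ζ.im ∧ ζ.im < 1})
    {z : ℂ} (hz : z.im = 1) : (h z).im = 1 := by
  have hzpos : 0 < z.im := by rw [hz]; exact one_pos
  apply le_antisymm
  · -- `z` is the limit of the points `z - iε` of `Λ`, as `ε` decreases to `0`
    have ho : IsOpen {ζ : ℂ | 0 < ζ.im} := isOpen_lt continuous_const Complex.continuous_im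
    have hc : ContinuousAt h z := hcont.continuousAt (ho.mem_nhds hzpos)
    have hl : Filter.Tendsto (fun e : ℝ => z - e * Complex.I) (nhdsWithin 0 (Ioi 0)) (nhds z) := by
      have : Continuous (fun e : ℝ => z - e * Complex.I) := by fun_prop
      simpa using (this.tendsto 0).mono_left nhdsWithin_le_nhds
    refine le_of_tendsto (Complex.continuous_im.continuousAt.tendsto.comp (hc.tendsto.comp hl)) ?_
    filter_upwards [Ioo_mem_nhdsGT (show (0 : ℝ) < 1 from one_pos)] with e he
    have : z - e * Complex.I ∈ {ζ : ℂ | 0 < ζ.im ∧ ζ.im < 1} := by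
      simp [hz, he.1, he.2]
    exact (hstrip.mapsTo this).2.le
  · by_contra! hlt
    obtain ⟨y, hy, hyz⟩ := hstrip.surjOn ⟨hbij.mapsTo hzpos, hlt⟩
    have : y = z := hbij.injOn hy.1 hzpos hyz
    rw [this] at hy
    exact hy.2.ne hz

/-- If `h` is a biholomorphic automorphism of the upper half-plane
`Π = {ζ : 0 < Im ζ}` (a holomorphic bijection of `Π` with holomorphic inverse `h'`) whose
restriction to the strip `Λ = {ζ : 0 < Im ζ < 1}` maps `Λ` bijectively onto `Λ`, then
`h` is the translation `ζ ↦ ζ + t` for some real `t`. -/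
theorem aut_of_halfplane_preserving_strip_is_translation
    (h h' : ℂ → ℂ)
    (hhol : DifferentiableOn ℂ h {ζ : ℂ | 0 < ζ.im})
    (hbij : Set.BijOn h {ζ : ℂ | 0 < ζ.im} {ζ : ℂ | 0 < ζ.im})
    (hinvhol : DifferentiableOn ℂ h' {ζ : ℂ | 0 < ζ.im})
    (hinv : Set.InvOn h' h {ζ : ℂ | 0 < ζ.im} {ζ : ℂ | 0 < ζ.im})
    (hstrip : Set.BijOn h {ζ : ℂ | 0 < ζ.im ∧ ζ.im < 1} {ζ : ℂ | 0 < ζ.im ∧ ζ.im < 1}) :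
    ∃ t : ℝ, ∀ ζ : ℂ, 0 < ζ.im → h ζ = ζ + (t : ℂ) := by
  have hmaps' : MapsTo h' {ζ : ℂ | 0 < ζ.im} {ζ : ℂ | 0 < ζ.im} :=
    hinv.1.mapsTo hbij.surjOn
  have him : ∀ x : ℝ, (h (x + Complex.I)).im = 1 := fun x =>
    im_eq_one_of_im_eq_one hhol.continuousOn hbij hstrip (by simp)
  have hpos : ∀ x : ℝ, 0 < ((x : ℂ) + Complex.I).im := fun x => by simp
  have hiso : ∀ x y : ℝ, ((h (x + Complex.I)).re - (h (y + Complex.I)).re) ^ 2 = (x - y) ^ 2 := by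
    intro x y
    have h1 := pick_normSq_le hhol hbij.mapsTo (hpos x) (hpos y)
    have h2 := pick_normSq_le hinvhol hmaps' (hbij.mapsTo (hpos x)) (hbij.mapsTo (hpos y))
    rw [hinv.1 (hpos x), hinv.1 (hpos y)] at h2
    simp [Complex.normSq_apply, him] at h1 h2
    nlinarith
  rcases real_isometry_cases (g := fun x : ℝ => (h (x + Complex.I)).re) hiso with hg | hg
  · refine ⟨(h ((0 : ℝ) + Complex.I)).re, fun ζ hζ => ?_⟩
    refine eqOn_of_eq_on_line (g := fun ζ => ζ + ((h ((0 : ℝ) + Complex.I)).re : ℂ))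
      hhol (by fun_prop) (fun x => ?_) hζ
    apply Complex.ext
    · simpa using hg x
    · simp [him]
  · exfalso
    have hE := eqOn_of_eq_on_line
      (g := fun ζ => -ζ + 2 * Complex.I + ((h ((0 : ℝ) + Complex.I)).re : ℂ))
      hhol (by fun_prop) (fun x => by
        apply Complex.ext
        · simpa using hg x
        · simp [him]
          norm_num)
    have h3 : (3 * Complex.I) ∈ {ζ : ℂ | 0 < ζ.im} := by simp
    have h4 : 0 < (h (3 * Complex.I)).im := hbij.mapsTo h3
    rw [hE h3] at h4
    simp at h4
    norm_num at h4
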